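/- For all integers r ≥ 1 and s, t ≥ 2, one has R_r(st + 1) > (R_r(s + 1) − 1) · (R_r(t + 1) − 1). -/

import Mathlib

open Filter Topology
open scoped ENNReal

/-- `N` has the Ramsey property for the tuple `k`: every `r`-coloring of the
edges of the complete graph on `N` vertices admits a color `i` and a set of
`k i` vertices all of whose connecting edges have color `i`. -/
def ramseyProp {r : ℕ} (k : Fin r → ℕ) (N : ℕ) : Prop :=
  ∀ c : Sym2 (Fin N) → Fin r, ∃ i : Fin r, ∃ S : Finset (Fin N),
    S.card = k i ∧ ∀ u ∈ S, ∀ v ∈ S, u ≠ v → c s(u, v) = i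

/-- The multicolor Ramsey number `R(k 0, …, k (r-1))`: the least positive `N`
with the Ramsey property. -/
noncomputable def multiRamsey {r : ℕ} (k : Fin r → ℕ) : ℕ :=
  sInf {N | 0 < N ∧ ramseyProp k N}

/-- The diagonal multicolor Ramsey number `R_r(k)`. -/
noncomputable def diagRamsey (r k : ℕ) : ℕ :=
  multiRamsey (fun _ : Fin r => k)

/-- DC, the "decreasing conjecture". -/
def DC : Prop :=
  ∀ (r : ℕ), 2 ≤ r → ∀ k : Fin r → ℕ, (∀ l, 2 ≤ k l) →
    ∀ i j : Fin r, i ≠ j → 3 ≤ k i → k i ≤ k j →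
      multiRamsey (fun l => if l = i then k i - 1 else if l = j then k j + 1 else k l)
        ≤ multiRamsey k

/-! Given colorings on `R_r(s + 1) - 1` and `R_r(t + 1) - 1` vertices without monochromatic cliques
on `s + 1`, respectively `t + 1`, vertices, color the pairs of the product vertex set
lexicographically: by their first coordinates if these differ, by their second coordinates
otherwise. A monochromatic clique projects to a clique of the first coloring, and each of its
fibers is a clique of the second one, so it has at most `s * t` vertices. Ramsey's theorem enters
because the infimum defining `R_r(s * t + 1)` must be attained. -/

section Coloring

variable {V W K : Type*}

/-- `S` spans a clique of color `i` in the coloring `c` of the edges of the complete graph on `V`.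
As in `ramseyProp`, `c` also colors the loops `s(v, v)`, which are ignored here. -/
def IsMonochromatic (c : Sym2 V → K) (i : K) (S : Set V) : Prop :=
  S.Pairwise fun u v => c s(u, v) = i

/-- A Ramsey coloring for `k`: cliques of color `i` have at most `k i` vertices. Such colorings
witness lower bounds for `R(k_1 + 1, …, k_r + 1)`; the shift by one avoids subtraction in products
of clique sizes. -/
def IsRamseyColoring (c : Sym2 V → K) (k : K → ℕ) : Prop :=
  ∀ i, ∀ S : Finset V, IsMonochromatic c i S → S.card ≤ k i

/-- The vertices joined to `v` by an edge of color `i`. -/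
def colorNeighborSet (c : Sym2 V → K) (v : V) (i : K) : Set V :=
  {u | u ≠ v ∧ c s(v, u) = i}

/-- The lexicographic product of two colorings: a pair of vertices of `V × W` is colored by its
first coordinates if these differ, and by its second coordinates otherwise. -/
def lexColoring [DecidableEq V] (c : Sym2 V → K) (d : Sym2 W → K) (e : Sym2 (V × W)) : K :=
  if (e.map Prod.fst).IsDiag then d (e.map Prod.snd) else c (e.map Prod.fst)

theorem isMonochromatic_image_iff {c : Sym2 V → K} {i : K} {f : W → V} {S : Set W}
    (hf : S.InjOn f) :
    IsMonochromatic c i (f '' S) ↔ IsMonochromatic (c ∘ Sym2.map f) i S :=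
  hf.pairwise_image

theorem IsMonochromatic.insert {c : Sym2 V → K} {v : V} {i : K} {S : Set V}
    (hS : IsMonochromatic c i S) (hv : S ⊆ colorNeighborSet c v i) :
    IsMonochromatic c i (insert v S) :=
  have : Std.Symm fun u w => c s(u, w) = i := ⟨fun _ _ h => Sym2.eq_swap ▸ h⟩
  Set.pairwise_insert_of_symm.2 ⟨hS, fun _ hu _ => (hv hu).2⟩

theorem IsMonochromatic.image_fst [DecidableEq V] {c : Sym2 V → K} {d : Sym2 W → K} {i : K}
    {S : Set (V × W)} (hS : IsMonochromatic (lexColoring c d) i S) :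
    IsMonochromatic c i (Prod.fst '' S) := by
  rintro _ ⟨p, hp, rfl⟩ _ ⟨q, hq, rfl⟩ hpq
  simpa [lexColoring, hpq] using hS hp hq (ne_of_apply_ne Prod.fst hpq)

theorem IsMonochromatic.preimage_mk [DecidableEq V] {c : Sym2 V → K} {d : Sym2 W → K} {i : K}
    {S : Set (V × W)} (hS : IsMonochromatic (lexColoring c d) i S) (x : V) :
    IsMonochromatic d i (Prod.mk x ⁻¹' S) := by
  intro y hy z hz hyz
  simpa [lexColoring] using hS hy hz (ne_of_apply_ne Prod.snd hyz)

namespace IsRamseyColoring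

variable {c : Sym2 V → K} {k : K → ℕ}

theorem pos (hc : IsRamseyColoring c k) (v : V) (i : K) : 0 < k i :=
  (Finset.singleton_nonempty v).card_pos.trans_le (hc i {v} (by simp [IsMonochromatic]))

theorem comp_map (hc : IsRamseyColoring c k) (f : W ↪ V) :
    IsRamseyColoring (c ∘ Sym2.map f) k := by
  intro i S hS
  rw [← S.card_map f]
  refine hc i _ ?_
  rw [Finset.coe_map]
  exact (isMonochromatic_image_iff f.injective.injOn).2 hS

theorem restrict_colorNeighborSet [DecidableEq K] (hc : IsRamseyColoring c k) (v : V) (i : K) :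
    IsRamseyColoring (c ∘ Sym2.map ((↑) : colorNeighborSet c v i → V))
      (Function.update k i (k i - 1)) := by
  classical
  intro j S hS
  obtain rfl | hji := eq_or_ne j i
  · let T : Finset V := S.map (.subtype _)
    have hT : (T : Set V) ⊆ colorNeighborSet c v j := by simp [T]
    have hmono : IsMonochromatic c j T := by
      rw [Finset.coe_map]
      exact (isMonochromatic_image_iff Subtype.val_injective.injOn).2 hS
    have hcard : (insert v T).card = S.card + 1 := by
      rw [Finset.card_insert_of_notMem fun hv => (hT hv).1 rfl, Finset.card_map]
    have hle := hc j (insert v T) (by simpa using hmono.insert hT)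
    rw [Function.update_self]
    omega
  · rw [Function.update_of_ne hji]
    exact hc.comp_map (.subtype _) j S hS

theorem lex [DecidableEq V] {d : Sym2 W → K} {l : K → ℕ}
    (hc : IsRamseyColoring c k) (hd : IsRamseyColoring d l) :
    IsRamseyColoring (lexColoring c d) (k * l) := by
  classical
  intro i S hS
  have hfst : (S.image Prod.fst).card ≤ k i := hc i _ (by simpa using hS.image_fst)
  have hfiber (x : V) : (S.filter fun p => p.1 = x).card ≤ l i := by
    let T : Finset W := S.preimage (Prod.mk x) (Prod.mk_right_injective x).injOn
    have hT : S.filter (fun p => p.1 = x) = T.map (.sectR x W) := by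
      ext ⟨y, z⟩
      simp +contextual [T, and_comm, eq_comm (a := x)]
    rw [hT, Finset.card_map]
    exact hd i T (by simpa [T] using hS.preimage_mk x)
  calc
    S.card ≤ l i * (S.image Prod.fst).card :=
      Finset.card_le_mul_card_image S (l i) fun x _ => hfiber x
    _ ≤ l i * k i := by gcongr
    _ = (k * l) i := mul_comm _ _

end IsRamseyColoring

theorem card_eq_sum_card_colorNeighborSet_add_one [Finite V] [Fintype K] (c : Sym2 V → K)
    (v : V) : Nat.card V = ∑ i, Nat.card (colorNeighborSet c v i) + 1 := by
  classical
  have := Fintype.ofFinite V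
  have hcard (i : K) : Nat.card (colorNeighborSet c v i) =
      ((Finset.univ.erase v).filter fun u => c s(v, u) = i).card := by
    rw [Nat.card_coe_set_eq, ← Set.ncard_coe_finset]
    congr 1
    ext u
    simp [colorNeighborSet]
  simp_rw [hcard]
  rw [← Finset.card_eq_sum_card_fiberwise (f := fun u => c s(v, u)) (by simp),
    Finset.card_erase_add_one (Finset.mem_univ v), Finset.card_univ, Nat.card_eq_fintype_card]

/-- Ramsey's theorem: by `restrict_colorNeighborSet`, the neighbors of a fixed vertex in any one
color satisfy the bound for a smaller sum of the `k i`. -/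
theorem IsRamseyColoring.card_le [Finite V] [Fintype K] {c : Sym2 V → K} {k : K → ℕ}
    (hc : IsRamseyColoring c k) :
    Nat.card V ≤ ∑ j ∈ Finset.range (∑ i, k i), Fintype.card K ^ j := by
  classical
  induction hn : ∑ i, k i generalizing V k with
  | zero =>
    have : IsEmpty V := by
      by_contra! ⟨v⟩
      -- The loop at `v` provides a color.
      have hpos := hc.pos v (c s(v, v))
      have hle := Finset.single_le_sum_of_canonicallyOrdered (f := k) (Finset.mem_univ (c s(v, v)))
      omega
    simp
  | succ n ih =>
    obtain _ | ⟨⟨v⟩⟩ := isEmpty_or_nonempty V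
    · simp
    have hnbr (i : K) :
        Nat.card (colorNeighborSet c v i) ≤ ∑ j ∈ Finset.range n, Fintype.card K ^ j := by
      have hsum : ∑ j, Function.update k i (k i - 1) j = n := by
        have hpos := hc.pos v i
        rw [← Finset.add_sum_erase _ _ (Finset.mem_univ i)] at hn
        rw [Finset.sum_update_of_mem (Finset.mem_univ i), ← Finset.erase_eq]
        omega
      exact ih (hc.restrict_colorNeighborSet v i) hsum
    calc
      Nat.card V = ∑ i, Nat.card (colorNeighborSet c v i) + 1 :=
        card_eq_sum_card_colorNeighborSet_add_one c v
      _ ≤ ∑ _i : K, ∑ j ∈ Finset.range n, Fintype.card K ^ j + 1 := by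
        gcongr with i
        exact hnbr i
      _ = ∑ j ∈ Finset.range (n + 1), Fintype.card K ^ j := by
        rw [geom_sum_succ, Finset.sum_const, Finset.card_univ, smul_eq_mul]

end Coloring

section RamseyNumber

variable {r N : ℕ} {k : Fin r → ℕ}

theorem ramseyProp_add_one_iff :
    ramseyProp (fun i => k i + 1) N ↔ ∀ c : Sym2 (Fin N) → Fin r, ¬ IsRamseyColoring c k := by
  unfold ramseyProp IsRamseyColoring
  push Not
  refine forall_congr' fun c => exists_congr fun i => ⟨?_, ?_⟩
  · rintro ⟨S, hS, hmono⟩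
    exact ⟨S, hmono, by omega⟩
  · rintro ⟨S, hmono, hS⟩
    obtain ⟨T, hTS, hT⟩ := Finset.exists_subset_card_eq (Nat.succ_le_of_lt hS)
    exact ⟨T, hT, hmono.mono hTS⟩

theorem ramseyProp.mono {l : Fin r → ℕ} (hl : ramseyProp l N) (hkl : k ≤ l) : ramseyProp k N := by
  intro c
  obtain ⟨i, S, hS, hmono⟩ := hl c
  obtain ⟨T, hTS, hT⟩ := Finset.exists_subset_card_eq ((hkl i).trans_eq hS.symm)
  exact ⟨i, T, hT, fun u hu v hv => hmono u (hTS hu) v (hTS hv)⟩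

theorem exists_pos_ramseyProp (k : Fin r → ℕ) : ∃ N, 0 < N ∧ ramseyProp k N := by
  let N := ∑ j ∈ Finset.range (∑ i, k i), r ^ j + 1
  have hsucc : ramseyProp (fun i => k i + 1) N :=
    ramseyProp_add_one_iff.2 fun c hc => absurd hc.card_le (by simp [N])
  exact ⟨N, Nat.succ_pos _, hsucc.mono fun i => Nat.le_succ (k i)⟩

theorem multiRamsey_pos (k : Fin r → ℕ) : 0 < multiRamsey k :=
  (Nat.sInf_mem (exists_pos_ramseyProp k)).1

theorem ramseyProp_multiRamsey (k : Fin r → ℕ) : ramseyProp k (multiRamsey k) :=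
  (Nat.sInf_mem (exists_pos_ramseyProp k)).2

theorem lt_multiRamsey_add_one_iff :
    N < multiRamsey (fun i => k i + 1) ↔ ∃ c : Sym2 (Fin N) → Fin r, IsRamseyColoring c k := by
  constructor
  · intro hN
    by_contra! hno
    have hprop : ramseyProp (fun i => k i + 1) N := ramseyProp_add_one_iff.2 hno
    obtain rfl | hpos := N.eq_zero_or_pos
    · exact hno isEmptyElim fun i S _ => by simp [Finset.eq_empty_of_isEmpty S]
    · exact hN.not_ge (Nat.sInf_le ⟨hpos, hprop⟩)
  · rintro ⟨c, hc⟩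
    by_contra! hle
    exact ramseyProp_add_one_iff.1 (ramseyProp_multiRamsey _) _
      (hc.comp_map (Fin.castLEEmb hle))

end RamseyNumber

theorem stmt8_general {r : ℕ} (s t : Fin r → ℕ) :
    (multiRamsey (fun i => s i + 1) - 1) * (multiRamsey (fun i => t i + 1) - 1) <
      multiRamsey fun i => s i * t i + 1 := by
  obtain ⟨c, hc⟩ := lt_multiRamsey_add_one_iff.1 (Nat.sub_one_lt (multiRamsey_pos _).ne')
  obtain ⟨d, hd⟩ := lt_multiRamsey_add_one_iff.1 (Nat.sub_one_lt (multiRamsey_pos _).ne')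
  exact lt_multiRamsey_add_one_iff.2
    ⟨_, (hc.lex hd).comp_map finProdFinEquiv.symm.toEmbedding⟩

/-- `R_r(st + 1) > (R_r(s + 1) − 1) · (R_r(t + 1) − 1)`. -/
theorem stmt8 (r s t : ℕ) (hr : 1 ≤ r) (hs : 2 ≤ s) (ht : 2 ≤ t) :
    (diagRamsey r (s + 1) - 1) * (diagRamsey r (t + 1) - 1) < diagRamsey r (s * t + 1) :=
  stmt8_general (fun _ => s) (fun _ => t)
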